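/- Let u be defined by u(t, x) = F_p(t, Δ(t, x)) for x > 0 and u(t, x) = −F_p(t, Δ(t, −x)) for x < 0, and let w∞(x) = −sgn(x) √(2(1 − g(x))). Then for every compact set K ⊂ ℝ ∖ {0}, u(t, ·) converges to w∞ uniformly on K as t → +∞. -/

import Mathlib

open Real Set Filter MeasureTheory
open scoped Topology

/-- The potential `g` from the Hamiltonian `H(x,p) = p²/2 + g(x)`. -/
noncomputable def g (x : ℝ) : ℝ := if |x| ≤ 1 then 1 - (1 - x ^ 2) ^ 4 else 1

/-- The derivative of `g`. -/
noncomputable def g' (x : ℝ) : ℝ := if |x| ≤ 1 then 8 * x * (1 - x ^ 2) ^ 3 else 0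

/-- `(q, p)` is a (global) solution of the Hamiltonian system (HS): `q̇ = p`, `ṗ = -g'(q)`. -/
def IsHSSol (q p : ℝ → ℝ) : Prop :=
  (∀ t : ℝ, HasDerivAt q (p t) t) ∧ (∀ t : ℝ, HasDerivAt p (-(g' (q t))) t)

/-- `F` is the flow of (HS): `F t q₀ p₀ = (q t, p t)` for the solution with data `(q₀, p₀)`. -/
def IsHSFlow (F : ℝ → ℝ → ℝ → ℝ × ℝ) : Prop :=
  ∀ q₀ p₀ : ℝ,
    IsHSSol (fun t => (F t q₀ p₀).1) (fun t => (F t q₀ p₀).2) ∧ F 0 q₀ p₀ = (q₀, p₀)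

/-- The set `([0,∞) × {2}) ∪ ({0} × (0,2])`, codomain of the map `Δ`. -/
def Dset : Set (ℝ × ℝ) := (Ici (0:ℝ) ×ˢ ({2} : Set ℝ)) ∪ ({(0:ℝ)} ×ˢ Ioc (0:ℝ) 2)

/-- `T` is the smallest positive period of `q`. -/
def IsSmallestPeriod (q : ℝ → ℝ) (T : ℝ) : Prop :=
  0 < T ∧ Function.Periodic q T ∧ ∀ T' : ℝ, 0 < T' → Function.Periodic q T' → T ≤ T'

/-- `T` is the period map `𝒯`, assigning to `p₀ ∈ (0, √2)` the smallest positive period of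
the `q`-component of the solution of (HS) with initial datum `(0, p₀)`. -/
def IsPeriodMap (F : ℝ → ℝ → ℝ → ℝ × ℝ) (T : ℝ → ℝ) : Prop :=
  ∀ p₀ ∈ Ioo (0:ℝ) (Real.sqrt 2), IsSmallestPeriod (fun t => (F t 0 p₀).1) (T p₀)

/-- `Δ` associates to `(t,x)` the datum in `Dset` whose orbit stays positive on `(0,t)`
and reaches `x` at time `t`. -/
def IsDeltaMap (F : ℝ → ℝ → ℝ → ℝ × ℝ) (Δ : ℝ → ℝ → ℝ × ℝ) : Prop :=
  ∀ t x : ℝ, 0 < t → 0 < x →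
    Δ t x ∈ Dset ∧ (F t (Δ t x).1 (Δ t x).2).1 = x ∧
      ∀ s ∈ Ioo (0:ℝ) t, 0 < (F s (Δ t x).1 (Δ t x).2).1

/-- The solution `u` of the conservation law built from the flow `F` and the map `Δ`
(extended by `0` at `x = 0`). -/
noncomputable def usol (F : ℝ → ℝ → ℝ → ℝ × ℝ) (Δ : ℝ → ℝ → ℝ × ℝ) (t x : ℝ) : ℝ :=
  if 0 < x then (F t (Δ t x).1 (Δ t x).2).2
  else if x < 0 then -(F t (Δ t (-x)).1 (Δ t (-x)).2).2
  else 0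

lemma g_eq (x : ℝ) : g x = 1 - (max (1 - x ^ 2) 0) ^ 4 := by
  unfold g
  split_ifs with h
  · rw [max_eq_left]
    have := (sq_le_one_iff_abs_le_one x).2 h
    linarith
  · rw [max_eq_right]
    · norm_num
    · have := (sq_le_one_iff_abs_le_one x).not.2 h
      linarith

lemma g'_eq (x : ℝ) : g' x = 8 * x * (max (1 - x ^ 2) 0) ^ 3 := by
  unfold g'
  split_ifs with h
  · rw [max_eq_left]
    have := (sq_le_one_iff_abs_le_one x).2 h
    linarith
  · rw [max_eq_right]
    · norm_num
    · have := (sq_le_one_iff_abs_le_one x).not.2 h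
      linarith

lemma hasDerivAt_max4 (y : ℝ) :
    HasDerivAt (fun y : ℝ => (max y 0) ^ 4) (4 * (max y 0) ^ 3) y := by
  have h4 : ∀ y : ℝ, HasDerivAt (fun y : ℝ => y ^ 4) (4 * y ^ 3) y := fun y => by
    simpa using hasDerivAt_pow 4 y
  rcases lt_trichotomy y 0 with h | h | h
  · rw [max_eq_right h.le]
    have : (fun y : ℝ => (max y 0) ^ 4) =ᶠ[𝓝 y] fun _ => (0:ℝ) := by
      filter_upwards [Iio_mem_nhds h] with z hz
      rw [max_eq_right (le_of_lt hz)]; norm_num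
    have h2 := (hasDerivAt_const y (0:ℝ)).congr_of_eventuallyEq this
    simpa using h2
  · subst h
    have h1 : HasDerivWithinAt (fun y : ℝ => (max y 0) ^ 4) 0 (Iic 0) 0 := by
      refine (hasDerivWithinAt_const (0:ℝ) (Iic 0) (0:ℝ)).congr ?_ ?_
      · intro z hz
        rw [max_eq_right hz]; norm_num
      · norm_num
    have h2 : HasDerivWithinAt (fun y : ℝ => (max y 0) ^ 4) 0 (Ici 0) 0 := by
      have h5 : HasDerivWithinAt (fun y : ℝ => y ^ 4) 0 (Ici 0) 0 := by
        simpa using (h4 0).hasDerivWithinAt (s := Ici 0)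
      refine h5.congr ?_ ?_
      · intro z hz
        rw [max_eq_left hz]
      · norm_num
    have h3 := h1.union h2
    rw [Iic_union_Ici, hasDerivWithinAt_univ] at h3
    simpa using h3
  · rw [max_eq_left h.le]
    refine (h4 y).congr_of_eventuallyEq ?_
    filter_upwards [Ioi_mem_nhds h] with z hz
    rw [max_eq_left (le_of_lt hz)]

lemma hasDerivAt_g (x : ℝ) : HasDerivAt g (g' x) x := by
  have h1 : HasDerivAt (fun x : ℝ => 1 - x ^ 2) (-(2 * x)) x := by
    simpa using (hasDerivAt_pow 2 x).const_sub 1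
  have h2 := ((hasDerivAt_max4 (1 - x ^ 2)).comp x h1).const_sub 1
  have h3 : g = fun x => 1 - ((fun y : ℝ => (max y 0) ^ 4) ∘ fun x : ℝ => 1 - x ^ 2) x := by
    funext x; exact g_eq x
  rw [h3, g'_eq]
  refine h2.congr_deriv ?_
  ring

lemma g_le_one (x : ℝ) : g x ≤ 1 := by
  rw [g_eq]
  have : 0 ≤ (max (1 - x ^ 2) 0) ^ 4 := by positivity
  linarith

lemma g_neg (x : ℝ) : g (-x) = g x := by simp [g]

lemma g_zero : g 0 = 0 := by simp [g]

lemma g'_nonneg {x : ℝ} (hx : 0 ≤ x) : 0 ≤ g' x := by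
  rw [g'_eq]; positivity

lemma g'_lower {x δ : ℝ} (hx : 0 ≤ x) (hδ : 0 < δ) (h : g x ≤ 1 - δ) : 8 * δ * x ≤ g' x := by
  rw [g_eq] at h
  rw [g'_eq]
  set m := max (1 - x ^ 2) 0 with hm
  have h0 : 0 ≤ m := le_max_right _ _
  have h1 : m ≤ 1 := max_le (by nlinarith) (by norm_num)
  have h2 : m ^ 4 ≤ m ^ 3 := pow_le_pow_of_le_one h0 h1 (by norm_num)
  have h3 : δ ≤ m ^ 3 := by linarith
  nlinarith [mul_le_mul_of_nonneg_left h3 hx]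

lemma energy {q p : ℝ → ℝ} (h : IsHSSol q p) (s : ℝ) :
    p s ^ 2 / 2 + g (q s) = p 0 ^ 2 / 2 + g (q 0) := by
  have hd : ∀ s, HasDerivAt (fun s => p s ^ 2 / 2 + g (q s)) 0 s := by
    intro s
    have h1 := ((h.2 s).pow 2).div_const 2
    have h2 := (hasDerivAt_g (q s)).comp s (h.1 s)
    refine (h1.add h2).congr_deriv ?_
    norm_num
    try ring
  exact is_const_of_deriv_eq_zero (fun s => (hd s).differentiableAt) (fun s => (hd s).deriv) s 0

/-- Upper bound on the momentum. -/
lemma p_upper {q p : ℝ → ℝ} (h : IsHSSol q p) {t : ℝ} (ht : 0 < t) (h0 : 0 ≤ q 0)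
    (hpos : ∀ s ∈ Ioo 0 t, 0 < q s) : p t * t ≤ q t := by
  have hanti : AntitoneOn p (Icc 0 t) := by
    refine antitoneOn_of_deriv_nonpos (convex_Icc _ _)
      (fun s _ => (h.2 s).continuousAt.continuousWithinAt)
      (fun s _ => (h.2 s).differentiableAt.differentiableWithinAt) ?_
    intro s hs
    rw [interior_Icc] at hs
    rw [(h.2 s).deriv]
    have := g'_nonneg (hpos s hs).le
    linarith
  have := (convex_Icc 0 t).mul_sub_le_image_sub_of_le_deriv (f := q) (C := p t)
    (fun s _ => (h.1 s).continuousAt.continuousWithinAt)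
    (fun s _ => (h.1 s).differentiableAt.differentiableWithinAt)
    (by
      intro s hs
      rw [interior_Icc] at hs
      rw [(h.1 s).deriv]
      exact hanti ⟨hs.1.le, hs.2.le⟩ ⟨ht.le, le_rfl⟩ hs.2.le) 0 ⟨le_rfl, ht.le⟩ t ⟨ht.le, le_rfl⟩ ht.le
  simp at this
  linarith

/-- Sturm comparison: low energy orbits return to zero in bounded time. -/
lemma energy_lower {q p : ℝ → ℝ} (h : IsHSSol q p) {t ω : ℝ} (hω : 0 < ω) (h0 : 0 ≤ q 0)
    (hpos : ∀ s ∈ Ioo 0 t, 0 < q s) (ht : π / ω < t) :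
    1 - ω ^ 2 / 8 < p 0 ^ 2 / 2 + g (q 0) := by
  by_contra! hE
  have hpi : 0 < π / ω := by positivity
  have hW : ∀ s, HasDerivAt (fun s => p s * sin (ω * s) - q s * (ω * cos (ω * s)))
      ((-(g' (q s)) + ω ^ 2 * q s) * sin (ω * s)) s := by
    intro s
    have hl : HasDerivAt (fun s => ω * s) ω s := by
      simpa using (hasDerivAt_id s).const_mul ω
    have h1 := (h.2 s).mul hl.sin
    have h2 := (h.1 s).mul (hl.cos.const_mul ω)
    refine (h1.sub h2).congr_deriv ?_
    ring
  have hanti : AntitoneOn (fun s => p s * sin (ω * s) - q s * (ω * cos (ω * s)))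
      (Icc 0 (π / ω)) := by
    refine antitoneOn_of_deriv_nonpos (convex_Icc _ _)
      (fun s _ => (hW s).continuousAt.continuousWithinAt)
      (fun s _ => (hW s).differentiableAt.differentiableWithinAt) ?_
    intro s hs
    rw [interior_Icc] at hs
    rw [(hW s).deriv]
    have hq := hpos s ⟨hs.1, hs.2.trans ht⟩
    have he := energy h s
    have hg : g (q s) ≤ 1 - ω ^ 2 / 8 := by nlinarith [sq_nonneg (p s)]
    have hg' := g'_lower hq.le (by positivity : 0 < ω ^ 2 / 8) hg
    have hs2 : ω * s ≤ π := by
      have := (lt_div_iff₀ hω).1 hs.2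
      linarith
    have hsin : 0 ≤ sin (ω * s) :=
      sin_nonneg_of_nonneg_of_le_pi (mul_nonneg hω.le hs.1.le) hs2
    exact mul_nonpos_of_nonpos_of_nonneg (by linarith) hsin
  have := hanti ⟨le_rfl, hpi.le⟩ ⟨hpi.le, le_rfl⟩ hpi.le
  have e : ω * (π / ω) = π := by field_simp
  simp [e] at this
  have hq := hpos _ ⟨hpi, ht⟩
  nlinarith [mul_pos hq hω, mul_nonneg h0 hω.le]

/-- A solution with energy above one keeps positive momentum. -/
lemma p_pos {q p : ℝ → ℝ} (h : IsHSSol q p) {t : ℝ} (ht : 0 < t) (h0 : 0 < p 0)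
    (hE : 1 < p 0 ^ 2 / 2 + g (q 0)) : 0 < p t := by
  by_contra! hp
  have hc : ContinuousOn p (Icc 0 t) := fun s _ => (h.2 s).continuousAt.continuousWithinAt
  obtain ⟨s, _, hs⟩ := intermediate_value_Icc' ht.le hc (⟨hp, h0.le⟩ : (0:ℝ) ∈ Icc (p t) (p 0))
  have := energy h s
  rw [hs] at this
  have := g_le_one (q s)
  linarith

lemma core {q p : ℝ → ℝ} (h : IsHSSol q p) {t b ω : ℝ} (ht : 0 < t) (hω : 0 < ω)
    (h0 : 0 ≤ q 0) (hp0 : 0 < p 0)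
    (hpos : ∀ s ∈ Ioo 0 t, 0 < q s) (htω : π / ω < t) (hb : 0 < b) (hqb : q t ≤ b) :
    |p t + √(2 * (1 - g (q t)))| ≤ ω + 2 * (b / t) := by
  have hbt : 0 < b / t := by positivity
  have hup : p t ≤ b / t := by
    rw [le_div_iff₀ ht]
    exact (p_upper h ht h0 hpos).trans hqb
  have hlow := energy_lower h hω h0 hpos htω
  have he := energy h t
  have hg := g_le_one (q t)
  set R := √(2 * (1 - g (q t))) with hR
  have hR0 : 0 ≤ R := sqrt_nonneg _
  have hR2 : R ^ 2 = 2 * (1 - g (q t)) := sq_sqrt (by linarith)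
  rcases le_or_gt (p 0 ^ 2 / 2 + g (q 0)) 1 with hE | hE
  · have h1 : p t ^ 2 ≤ R ^ 2 := by linarith
    have h2 : R ^ 2 ≤ p t ^ 2 + ω ^ 2 := by nlinarith [sq_nonneg ω]
    have h3 : |p t| ≤ R := abs_le_of_sq_le_sq h1 hR0
    have h4 : R ≤ |p t| + ω := by
      refine abs_le_of_sq_le_sq' ?_ (by positivity) |>.2
      nlinarith [mul_nonneg (abs_nonneg (p t)) hω.le, sq_abs (p t)]
    have h5 := abs_le.1 h3
    rw [abs_le]
    constructor
    · linarith
    · rcases abs_cases (p t) with ⟨h6, _⟩ | ⟨h6, _⟩ <;> rw [h6] at h4 <;> linarith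
  · have hp := p_pos h ht hp0 hE
    have h1 : R ^ 2 ≤ p t ^ 2 := by linarith
    have h2 : R ≤ p t := abs_le_of_sq_le_sq' h1 hp.le |>.2
    rw [abs_of_nonneg (by linarith)]
    linarith

lemma main_bound (F : ℝ → ℝ → ℝ → ℝ × ℝ) (hF : IsHSFlow F)
    (Δ : ℝ → ℝ → ℝ × ℝ) (hΔ : IsDeltaMap F Δ) {t x b ω : ℝ} (ht : 0 < t) (hω : 0 < ω)
    (htω : π / ω < t) (hx : 0 < x) (hb : x ≤ b) :
    |(F t (Δ t x).1 (Δ t x).2).2 + √(2 * (1 - g x))| ≤ ω + 2 * (b / t) := by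
  obtain ⟨hD, hq, hpos⟩ := hΔ t x ht hx
  obtain ⟨hsol, hini⟩ := hF (Δ t x).1 (Δ t x).2
  have hD' : 0 ≤ (Δ t x).1 ∧ 0 < (Δ t x).2 := by
    rcases hD with ⟨h1, h2⟩ | ⟨h1, h2⟩
    · simp at h1 h2
      exact ⟨h1, by rw [h2]; norm_num⟩
    · simp at h1 h2
      exact ⟨h1.ge, h2.1⟩
  have := core (b := b) hsol ht hω (by simp only [hini]; exact hD'.1)
    (by simp only [hini]; exact hD'.2) hpos htω (hx.trans_le hb) (by simp only [hq]; exact hb)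
  simpa only [hq] using this

/-- Local uniform convergence: with `w∞(x) = -sgn(x) √(2(1-g(x)))`, for every compact set
`K ⊆ ℝ \ {0}`, `u(t,·) → w∞` uniformly on `K` as `t → +∞`. -/
theorem stmt_18 (F : ℝ → ℝ → ℝ → ℝ × ℝ) (hF : IsHSFlow F)
    (Δ : ℝ → ℝ → ℝ × ℝ) (hΔ : IsDeltaMap F Δ) :
    ∀ K : Set ℝ, IsCompact K → K ⊆ {(0:ℝ)}ᶜ →
      TendstoUniformlyOn (fun t x => usol F Δ t x)
        (fun x => -(Real.sign x) * Real.sqrt (2 * (1 - g x))) atTop K := by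
  intro K hK hK0
  obtain ⟨b, hb⟩ := hK.isBounded.exists_norm_le
  rw [Metric.tendstoUniformlyOn_iff]
  intro ε hε
  set B := |b| + 1 with hB
  have hB0 : 0 < B := by positivity
  have hlim : Tendsto (fun t : ℝ => B / t) atTop (𝓝 0) := tendsto_const_nhds.div_atTop tendsto_id
  filter_upwards [eventually_gt_atTop 0, eventually_gt_atTop (π / (ε / 2)),
    hlim.eventually (Iio_mem_nhds (by positivity : (0:ℝ) < ε / 4))] with t ht htω htB x hx
  have htB' : B / t < ε / 4 := htB
  have hx0 : x ≠ 0 := hK0 hx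
  have hxb : |x| ≤ B := by
    have := hb x hx
    rw [Real.norm_eq_abs] at this
    linarith [le_abs_self b]
  rw [dist_comm, Real.dist_eq]
  rcases lt_or_gt_of_ne hx0 with h | h
  · have h1 := main_bound F hF Δ hΔ ht (half_pos hε) htω (neg_pos.2 h) ((neg_le_abs x).trans hxb)
    rw [g_neg, ← abs_neg] at h1
    rw [Real.sign_of_neg h, usol, if_neg h.not_gt, if_pos h]
    refine lt_of_le_of_lt (le_of_eq_of_le ?_ h1) (by linarith)
    congr 1
    ring
  · have h1 := main_bound F hF Δ hΔ ht (half_pos hε) htω h ((le_abs_self x).trans hxb)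
    rw [Real.sign_of_pos h, usol, if_pos h]
    refine lt_of_le_of_lt (le_of_eq_of_le ?_ h1) (by linarith)
    congr 1
    ring
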